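/- arXiv:1603.01115 — 6 statements merged into one kernel-verified Lean document; each statement's English description precedes it below -/
import Mathlib

section
/- Fix K ≥ 1 and reals α_i > 0, E_i^b ≥ 0, w_i > 0, and energies E_i with 0 < E_i < E_i^b + w_i for i = 1,…,K. Set τ₀* = min( max(0, max_i (E_i − E_i^b)/w_i), 1 ) and τ_i* = α_i·E_i·(1 − τ₀*) / (Σ_{j=1}^K α_j·E_j) for i = 1,…,K. Then (τ₀*, τ₁*,…,τ_K*) satisfies Σ_{i=1}^K τ_i* ≤ 1 − τ₀*, τ_i* ≥ 0 for all i, and τ₀* ≥ (E_i − E_i^b)/w_i for every i; and for every (τ₀, τ₁,…,τ_K) with τ_i ≥ 0 for all i, Σ_{i=1}^K τ_i ≤ 1 − τ₀, and τ₀ ≥ (E_i − E_i^b)/w_i for all i, one has Σ_{i=1}^K τ_i · log₂(1 + α_i·E_i/τ_i) ≤ Σ_{i=1}^K τ_i* · log₂(1 + α_i·E_i/τ_i*), where terms with τ_i = 0 are interpreted as 0. -/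
/-!
The function `rate b τ c = τ * logb b (1 + c / τ)` is the perspective of a concave function, so it
is positively homogeneous and superadditive in `(τ, c)`. Pooling a user with an idle slot `(τ', 0)`
shows that it increases with `τ`, and pooling all users bounds the sum throughput by the rate of a
single user with the total gain and the total time. Homogeneity turns this into an equality when the
times are proportional to the gains. The remaining time `1 - τ₀` is largest when `τ₀` is the least
harvesting time allowed by the constraints.
-/

open Real Finset

/-- The rate achieved in time `τ` with gain `c`, in units of logarithms to base `b`. The paper's
`Rᵢ(Eᵢ, τᵢ)` is `rate 2 τᵢ (αᵢ * Eᵢ)`; its convention `Rᵢ(Eᵢ, 0) = 0` needs no case distinction,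
since `c / 0 = 0` and the factor `τ` vanishes. -/
noncomputable def rate (b τ c : ℝ) : ℝ := τ * logb b (1 + c / τ)

theorem concaveOn_logb_Ioi {b : ℝ} (hb : 1 ≤ b) : ConcaveOn ℝ (Set.Ioi 0) (logb b) := by
  have hlogb : logb b = fun x => (log b)⁻¹ • log x := funext fun x => div_eq_inv_mul _ _
  rw [hlogb]
  exact strictConcaveOn_log_Ioi.concaveOn.smul (inv_nonneg.2 (log_nonneg hb))

namespace rate

variable {b c d σ τ : ℝ}

theorem zero_left (b c : ℝ) : rate b 0 c = 0 := zero_mul _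

theorem zero_right (b τ : ℝ) : rate b τ 0 = 0 := by simp [rate]

theorem mul_mul (b k τ c : ℝ) : rate b (k * τ) (k * c) = k * rate b τ c := by
  rcases eq_or_ne k 0 with rfl | hk
  · simp only [zero_mul, zero_left]
  · simp only [rate, mul_div_mul_left _ _ hk, mul_assoc]

theorem mono_right (hb : 1 < b) (hτ : 0 ≤ τ) (hc : 0 ≤ c) (hcd : c ≤ d) :
    rate b τ c ≤ rate b τ d := by
  unfold rate
  gcongr

theorem add_le_of_pos (hb : 1 ≤ b) (hσ : 0 < σ) (hτ : 0 < τ) (hc : 0 ≤ c) (hd : 0 ≤ d) :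
    rate b σ c + rate b τ d ≤ rate b (σ + τ) (c + d) := by
  have hmean : σ / (σ + τ) * (1 + c / σ) + τ / (σ + τ) * (1 + d / τ) =
      1 + (c + d) / (σ + τ) := by
    field_simp
    ring
  have hjensen : σ / (σ + τ) * logb b (1 + c / σ) + τ / (σ + τ) * logb b (1 + d / τ) ≤
      logb b (1 + (c + d) / (σ + τ)) := by
    rw [← hmean]
    exact (concaveOn_logb_Ioi hb).2 (Set.mem_Ioi.2 (by positivity)) (Set.mem_Ioi.2 (by positivity))
      (by positivity) (by positivity) (by field_simp)
  calc rate b σ c + rate b τ d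
      = (σ + τ) * (σ / (σ + τ) * logb b (1 + c / σ) + τ / (σ + τ) * logb b (1 + d / τ)) := by
        unfold rate
        field_simp
    _ ≤ rate b (σ + τ) (c + d) := mul_le_mul_of_nonneg_left hjensen (by positivity)

theorem add_le (hb : 1 < b) (hσ : 0 ≤ σ) (hτ : 0 ≤ τ) (hc : 0 ≤ c) (hd : 0 ≤ d) :
    rate b σ c + rate b τ d ≤ rate b (σ + τ) (c + d) := by
  rcases hσ.eq_or_lt with rfl | hσ
  · simpa only [zero_left, zero_add] using mono_right hb hτ hd (le_add_of_nonneg_left hc)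
  rcases hτ.eq_or_lt with rfl | hτ
  · simpa only [zero_left, add_zero] using mono_right hb hσ.le hc (le_add_of_nonneg_right hd)
  exact add_le_of_pos hb.le hσ hτ hc hd

theorem mono_left (hb : 1 < b) (hσ : 0 ≤ σ) (hστ : σ ≤ τ) (hc : 0 ≤ c) :
    rate b σ c ≤ rate b τ c := by
  simpa only [zero_right, add_zero, add_sub_cancel] using
    add_le hb hσ (sub_nonneg.2 hστ) hc le_rfl

variable {ι : Type*} {s : Finset ι} {f g : ι → ℝ}

theorem sum_le (hb : 1 < b) (hf : ∀ i ∈ s, 0 ≤ f i) (hg : ∀ i ∈ s, 0 ≤ g i) :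
    ∑ i ∈ s, rate b (f i) (g i) ≤ rate b (∑ i ∈ s, f i) (∑ i ∈ s, g i) := by
  induction s using Finset.cons_induction with
  | empty => simp only [sum_empty, zero_left, le_refl]
  | cons i s hi ih =>
    simp only [forall_mem_cons] at hf hg
    simp only [sum_cons]
    calc rate b (f i) (g i) + ∑ j ∈ s, rate b (f j) (g j)
        ≤ rate b (f i) (g i) + rate b (∑ j ∈ s, f j) (∑ j ∈ s, g j) := by
          gcongr
          exact ih hf.2 hg.2
      _ ≤ rate b (f i + ∑ j ∈ s, f j) (g i + ∑ j ∈ s, g j) :=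
          add_le hb hf.1 (sum_nonneg hf.2) hg.1 (sum_nonneg hg.2)

theorem sum_proportional (b T : ℝ) (hg : ∑ j ∈ s, g j ≠ 0) :
    ∑ i ∈ s, rate b (g i * T / ∑ j ∈ s, g j) (g i) = rate b T (∑ j ∈ s, g j) := by
  set G := ∑ j ∈ s, g j with hG
  have hterm (i : ι) : rate b (g i * T / G) (g i) = g i / G * rate b T G := by
    rw [← mul_mul, div_mul_cancel₀ _ hg, mul_div_right_comm]
  simp_rw [hterm]
  rw [← sum_mul, ← sum_div, ← hG, div_self hg, one_mul]

theorem sum_le_sum_proportional {T : ℝ} (hb : 1 < b) (hf : ∀ i ∈ s, 0 ≤ f i)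
    (hfT : ∑ i ∈ s, f i ≤ T) (hg : ∀ i ∈ s, 0 ≤ g i) (hG : ∑ j ∈ s, g j ≠ 0) :
    ∑ i ∈ s, rate b (f i) (g i) ≤ ∑ i ∈ s, rate b (g i * T / ∑ j ∈ s, g j) (g i) :=
  calc ∑ i ∈ s, rate b (f i) (g i)
      ≤ rate b (∑ i ∈ s, f i) (∑ i ∈ s, g i) := sum_le hb hf hg
    _ ≤ rate b T (∑ i ∈ s, g i) := mono_left hb (sum_nonneg hf) hfT (sum_nonneg hg)
    _ = ∑ i ∈ s, rate b (g i * T / ∑ j ∈ s, g j) (g i) := (sum_proportional b T hG).symm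

end rate

theorem isLeast_sup_ciSup {α : Type*} {ι : Sort*} [ConditionallyCompleteLattice α] [Nonempty ι]
    {a : ι → α} (ha : BddAbove (Set.range a)) (x : α) :
    IsLeast {t | x ≤ t ∧ ∀ i, a i ≤ t} (x ⊔ ⨆ i, a i) :=
  ⟨⟨le_sup_left, fun i => (le_ciSup ha i).trans le_sup_right⟩,
    fun _ ht => sup_le ht.1 (ciSup_le ht.2)⟩

/-- Theorem 2 of the paper: given energies `E` with
`0 < E i < Eb i + w i`, the time allocations
`τ₀* = min (max 0 (maxᵢ (Eᵢ - Ebᵢ)/wᵢ)) 1` and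
`τᵢ* = αᵢ Eᵢ (1 - τ₀*) / Σⱼ αⱼ Eⱼ` are feasible and maximize the sum
throughput `Σᵢ τᵢ log₂(1 + αᵢ Eᵢ / τᵢ)` over all nonnegative `(τ₀, τ)` with
`Σᵢ τᵢ ≤ 1 - τ₀` and `τ₀ ≥ (Eᵢ - Ebᵢ)/wᵢ` for all `i`.  (In Lean,
`τ * Real.logb 2 (1 + c / τ)` equals `0` at `τ = 0`, matching the convention
that terms with `τᵢ = 0` are interpreted as `0`.) -/
theorem opt_time_allocation_given_energy (K : ℕ) (hK : 1 ≤ K)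
    (α Eb w E : Fin K → ℝ)
    (hα : ∀ i, 0 < α i) (hEb : ∀ i, 0 ≤ Eb i) (hw : ∀ i, 0 < w i)
    (hE : ∀ i, 0 < E i ∧ E i < Eb i + w i)
    (τ0 : ℝ) (hτ0 : τ0 = min (max 0 (⨆ i, (E i - Eb i) / w i)) 1)
    (τ : Fin K → ℝ)
    (hτ : ∀ i, τ i = α i * E i * (1 - τ0) / ∑ j, α j * E j) :
    (0 ≤ τ0 ∧ (∑ i, τ i) ≤ 1 - τ0 ∧ (∀ i, 0 ≤ τ i) ∧
      ∀ i, (E i - Eb i) / w i ≤ τ0) ∧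
    ∀ (σ0 : ℝ) (σ : Fin K → ℝ), 0 ≤ σ0 → (∀ i, 0 ≤ σ i) →
      (∑ i, σ i) ≤ 1 - σ0 → (∀ i, (E i - Eb i) / w i ≤ σ0) →
      (∑ i, σ i * Real.logb 2 (1 + α i * E i / σ i)) ≤
        ∑ i, τ i * Real.logb 2 (1 + α i * E i / τ i) := by
  have : Nonempty (Fin K) := ⟨⟨0, hK⟩⟩
  have hleast := isLeast_sup_ciSup (Set.finite_range fun i => (E i - Eb i) / w i).bddAbove 0
  have hτ0_le : max 0 (⨆ i, (E i - Eb i) / w i) ≤ 1 :=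
    hleast.2 ⟨zero_le_one, fun i => (div_le_one (hw i)).2 (by linarith [(hE i).2])⟩
  rw [min_eq_left hτ0_le] at hτ0
  subst hτ0
  set τ0 := max 0 (⨆ i, (E i - Eb i) / w i)
  obtain rfl := funext hτ
  have hgain (i : Fin K) : 0 < α i * E i := mul_pos (hα i) (hE i).1
  have hG : 0 < ∑ j, α j * E j := sum_pos (fun i _ => hgain i) univ_nonempty
  refine ⟨⟨hleast.1.1, ?_, fun i => ?_, hleast.1.2⟩, fun σ0 σ hσ0 hσ hsum hcausal => ?_⟩
  · rw [← sum_div, ← sum_mul, mul_div_cancel_left₀ _ hG.ne']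
  · exact div_nonneg (mul_nonneg (hgain i).le (sub_nonneg.2 hτ0_le)) hG.le
  · have hτσ : τ0 ≤ σ0 := hleast.2 ⟨hσ0, hcausal⟩
    exact rate.sum_le_sum_proportional one_lt_two (fun i _ => hσ i)
      (hsum.trans (sub_le_sub_left hτσ 1)) (fun i _ => (hgain i).le) hG.ne'
end

section
/- Let K ≥ 1, let c₁,…,c_K > 0 and S > 0 be reals. For every (τ₁,…,τ_K) with τ_i ≥ 0 and Σ_{i=1}^K τ_i ≤ S, one has Σ_{i=1}^K τ_i · log₂(1 + c_i/τ_i) ≤ S · log₂(1 + (Σ_{i=1}^K c_i)/S) (terms with τ_i = 0 interpreted as 0), and equality holds for τ_i = c_i·S/(Σ_{j=1}^K c_j); in particular the maximum of Σ_i τ_i · log₂(1 + c_i/τ_i) over the set {τ ≥ 0 : Σ_i τ_i ≤ S} equals S · log₂(1 + (Σ_i c_i)/S) and is attained at the proportional allocation τ_i = c_i·S/Σ_j c_j. -/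
/-!
Divide the objective by `S` and regard `τᵢ / S` as weights. Their sum is at most `1`; assigning the
missing weight to the point `0`, where the utility `x ↦ log₂ (1 + x)` vanishes, makes Jensen's
inequality applicable. The weighted mean of the ratios `cᵢ / τᵢ` is at most `(∑ᵢ cᵢ) / S`, so
monotonicity of the utility gives the bound. The proportional allocation uses the whole budget and
makes all the ratios equal, so nothing is lost.
-/

open Finset Set

section Jensen

variable {𝕜 E β ι : Type*} [Field 𝕜] [LinearOrder 𝕜] [IsStrictOrderedRing 𝕜] [AddCommGroup E]
  [AddCommGroup β] [PartialOrder β] [IsOrderedAddMonoid β] [Module 𝕜 E] [Module 𝕜 β]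
  [IsStrictOrderedModule 𝕜 β] {A : Set E} {f : E → β} {s : Finset ι} {w : ι → 𝕜} {p : ι → E}

lemma sum_smul_le_map_sum_of_sum_le_one (hf : ConcaveOn 𝕜 A f) (h0 : 0 ∈ A) (hf0 : 0 ≤ f 0)
    (hw : ∀ i ∈ s, 0 ≤ w i) (hw1 : ∑ i ∈ s, w i ≤ 1) (hp : ∀ i ∈ s, p i ∈ A) :
    ∑ i ∈ s, w i • f (p i) ≤ f (∑ i ∈ s, w i • p i) := by
  have slack_nonneg : 0 ≤ 1 - ∑ i ∈ s, w i := sub_nonneg.2 hw1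
  calc ∑ i ∈ s, w i • f (p i)
      ≤ (1 - ∑ i ∈ s, w i) • f 0 + ∑ i ∈ s, w i • f (p i) :=
        le_add_of_nonneg_left (smul_nonneg slack_nonneg hf0)
    _ ≤ f ((1 - ∑ i ∈ s, w i) • 0 + ∑ i ∈ s, w i • p i) :=
        hf.map_add_sum_le hw (sub_add_cancel _ _) hp slack_nonneg h0
    _ = f (∑ i ∈ s, w i • p i) := by rw [smul_zero, zero_add]

end Jensen

section Allocation

variable {𝕜 ι : Type*} [Field 𝕜] {s : Finset ι} {c : ι → 𝕜}

lemma sum_mul_div_sum_eq (hc : ∑ i ∈ s, c i ≠ 0) (S : 𝕜) :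
    ∑ i ∈ s, c i * S / ∑ j ∈ s, c j = S := by
  rw [← sum_div, ← sum_mul, mul_div_cancel_left₀ S hc]

lemma sum_proportional_mul_map_div_eq (hc : ∑ i ∈ s, c i ≠ 0) (S : 𝕜) (f : 𝕜 → 𝕜) :
    ∑ i ∈ s, (c i * S / ∑ j ∈ s, c j) * f (c i / (c i * S / ∑ j ∈ s, c j)) =
      S * f ((∑ i ∈ s, c i) / S) := by
  have term_eq (i : ι) : (c i * S / ∑ j ∈ s, c j) * f (c i / (c i * S / ∑ j ∈ s, c j)) =
      (c i * S / ∑ j ∈ s, c j) * f ((∑ j ∈ s, c j) / S) := by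
    obtain hci | hci := eq_or_ne (c i) 0
    · simp [hci]
    · rw [div_div_eq_mul_div, mul_div_mul_left _ _ hci]
  simp_rw [term_eq]
  rw [← sum_mul, sum_mul_div_sum_eq hc]

variable [LinearOrder 𝕜] [IsStrictOrderedRing 𝕜] {f : 𝕜 → 𝕜} {τ : ι → 𝕜} {S : 𝕜}

lemma sum_mul_map_div_le (hf : ConcaveOn 𝕜 (Ici 0) f) (hmono : MonotoneOn f (Ici 0))
    (hf0 : 0 ≤ f 0) (hc : ∀ i ∈ s, 0 ≤ c i) (hS : 0 < S) (hτ : ∀ i ∈ s, 0 ≤ τ i)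
    (hτS : ∑ i ∈ s, τ i ≤ S) :
    ∑ i ∈ s, τ i * f (c i / τ i) ≤ S * f ((∑ i ∈ s, c i) / S) := by
  have weight_nonneg : ∀ i ∈ s, 0 ≤ τ i / S := fun i hi => div_nonneg (hτ i hi) hS.le
  have weight_sum_le : ∑ i ∈ s, τ i / S ≤ 1 := by
    rw [← sum_div]
    exact div_le_one_of_le₀ hτS hS.le
  have ratio_nonneg : ∀ i ∈ s, 0 ≤ c i / τ i := fun i hi => div_nonneg (hc i hi) (hτ i hi)
  have mean_nonneg : 0 ≤ ∑ i ∈ s, τ i / S * (c i / τ i) :=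
    sum_nonneg fun i hi => mul_nonneg (weight_nonneg i hi) (ratio_nonneg i hi)
  -- Only an inequality: the terms with `τ i = 0` contribute `0` on the left.
  have mean_le : ∑ i ∈ s, τ i / S * (c i / τ i) ≤ (∑ i ∈ s, c i) / S := by
    rw [sum_div]
    refine sum_le_sum fun i hi => ?_
    rw [div_mul_eq_mul_div, mul_div_left_comm]
    gcongr
    exact mul_le_of_le_one_right (hc i hi) (div_self_le_one _)
  calc ∑ i ∈ s, τ i * f (c i / τ i)
      = S * ∑ i ∈ s, τ i / S * f (c i / τ i) := by
        simp_rw [mul_sum, ← mul_assoc, mul_div_cancel₀ _ hS.ne']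
    _ ≤ S * f (∑ i ∈ s, τ i / S * (c i / τ i)) := by
        gcongr
        exact sum_smul_le_map_sum_of_sum_le_one hf self_mem_Ici hf0 weight_nonneg weight_sum_le
          ratio_nonneg
    _ ≤ S * f ((∑ i ∈ s, c i) / S) := by
        gcongr
        exact hmono mean_nonneg (mean_nonneg.trans mean_le) mean_le

theorem proportional_allocation_optimal_general [Fintype ι] (hf : ConcaveOn 𝕜 (Ici 0) f)
    (hmono : MonotoneOn f (Ici 0)) (hf0 : 0 ≤ f 0) (hc : ∀ i, 0 ≤ c i) (hC : 0 < ∑ i, c i)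
    (hS : 0 < S) :
    (∀ τ : ι → 𝕜, (∀ i, 0 ≤ τ i) → ∑ i, τ i ≤ S →
      ∑ i, τ i * f (c i / τ i) ≤ S * f ((∑ i, c i) / S)) ∧
    (∀ i, 0 ≤ c i * S / ∑ j, c j) ∧
    ∑ i, c i * S / ∑ j, c j ≤ S ∧
    ∑ i, (c i * S / ∑ j, c j) * f (c i / (c i * S / ∑ j, c j)) = S * f ((∑ i, c i) / S) :=
  ⟨fun _ hτ hτS => sum_mul_map_div_le hf hmono hf0 (fun i _ => hc i) hS (fun i _ => hτ i) hτS,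
    fun i => div_nonneg (mul_nonneg (hc i) hS.le) hC.le,
    (sum_mul_div_sum_eq hC.ne' S).le,
    sum_proportional_mul_map_div_eq hC.ne' S f⟩

end Allocation

section Logb

variable {b : ℝ}

lemma concaveOn_logb (hb : 1 < b) : ConcaveOn ℝ (Ioi 0) (Real.logb b) := by
  have h := strictConcaveOn_log_Ioi.concaveOn.smul (inv_nonneg.2 (Real.log_pos hb).le)
  simpa only [smul_eq_mul, inv_mul_eq_div] using! h

lemma concaveOn_logb_one_add (hb : 1 < b) :
    ConcaveOn ℝ (Ioi (-1)) fun x => Real.logb b (1 + x) := by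
  simpa [Function.comp_def] using (concaveOn_logb hb).translate_right 1

lemma monotoneOn_logb_one_add (hb : 1 < b) :
    MonotoneOn (fun x => Real.logb b (1 + x)) (Ioi (-1)) := by
  intro x (hx : -1 < x) y _ hxy
  exact Real.logb_le_logb_of_le hb (by linarith) (by linarith)

end Logb

/-- Proportional time allocation: for `cᵢ > 0` and `S > 0`, every nonnegative
`τ` with `Σᵢ τᵢ ≤ S` satisfies
`Σᵢ τᵢ log₂(1 + cᵢ/τᵢ) ≤ S log₂(1 + (Σᵢ cᵢ)/S)`, the proportional allocation
`τᵢ = cᵢ S / Σⱼ cⱼ` is feasible, and it attains this bound with equality.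
(In Lean, `τ * Real.logb 2 (1 + c / τ)` equals `0` at `τ = 0`.) -/
theorem proportional_allocation_optimal (K : ℕ) (hK : 1 ≤ K)
    (c : Fin K → ℝ) (S : ℝ) (hc : ∀ i, 0 < c i) (hS : 0 < S) :
    (∀ τ : Fin K → ℝ, (∀ i, 0 ≤ τ i) → (∑ i, τ i) ≤ S →
      (∑ i, τ i * Real.logb 2 (1 + c i / τ i)) ≤
        S * Real.logb 2 (1 + (∑ i, c i) / S)) ∧
    (∀ i, 0 ≤ c i * S / ∑ j, c j) ∧
    (∑ i, c i * S / ∑ j, c j) ≤ S ∧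
    (∑ i, (c i * S / ∑ j, c j) *
        Real.logb 2 (1 + c i / (c i * S / ∑ j, c j))) =
      S * Real.logb 2 (1 + (∑ i, c i) / S) := by
  have Ici_subset : Ici (0 : ℝ) ⊆ Ioi (-1) := Ici_subset_Ioi.2 neg_one_lt_zero
  exact proportional_allocation_optimal_general
    ((concaveOn_logb_one_add one_lt_two).subset Ici_subset (convex_Ici 0))
    ((monotoneOn_logb_one_add one_lt_two).mono Ici_subset) (by simp) (fun i => (hc i).le)
    (sum_pos (fun i _ => hc i) ⟨⟨0, hK⟩, mem_univ _⟩) hS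
end

section
/- Fix K ≥ 1 and reals τ_i > 0, α_i > 0, caps c_i > 0 for i = 1,…,K, and 0 < E_max < Σ_{i=1}^K c_i. Then there exists λ* < 0 such that the energies E_i* = min( max(0, −(τ_i/α_i)·(α_i/(λ*·ln 2) + 1)), c_i ) satisfy Σ_{i=1}^K E_i* = E_max, and this vector E* maximizes Σ_{i=1}^K τ_i · log₂(1 + α_i·E_i/τ_i) over the set {(E₁,…,E_K) : 0 ≤ E_i ≤ c_i for all i and Σ_{i=1}^K E_i ≤ E_max}. -/
/-!
At a water level `w > 0`, each user's clamped energy maximizes the Lagrangian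
`x ↦ τ log_b (1 + α x / τ) - x / (w log b)` over `[0, c]`: the marginal rate at `s` is
`1 / ((1 / α + s / τ) log b)`, which equals the price `1 / (w log b)` exactly at the unclamped level
`s = τ (w - 1 / α)`, and clamping is the projection onto `[0, c]`. Summing over the users gives
optimality under the total-energy constraint. The total energy is continuous in `w`, vanishes for
small `w` and equals `∑ cᵢ` for large `w`, so some level spends exactly `Emax`; the multiplier is
then `λ = -1 / (w log b)`.
-/

open Filter Set

theorem isMaxOn_sum_of_isMaxOn_sub_mul {ι R : Type*} [Fintype ι] [Ring R] [PartialOrder R]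
    [IsOrderedRing R] {β : ι → Type*} {f g : ∀ i, β i → R} {S : ∀ i, Set (β i)} {x : ∀ i, β i}
    {μ : R} (hμ : 0 ≤ μ) (hx : ∀ i, IsMaxOn (fun y => f i y - μ * g i y) (S i) (x i)) :
    IsMaxOn (fun y : ∀ i, β i => ∑ i, f i (y i))
      {y | (∀ i, y i ∈ S i) ∧ ∑ i, g i (y i) ≤ ∑ i, g i (x i)} x := by
  rintro y ⟨hyS, hyg⟩
  have hLagrangian : ∑ i, f i (y i) - μ * ∑ i, g i (y i) ≤ ∑ i, f i (x i) - μ * ∑ i, g i (x i) := by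
    simpa only [Finset.sum_sub_distrib, Finset.mul_sum] using
      Finset.sum_le_sum fun i _ => hx i (hyS i)
  calc
    ∑ i, f i (y i) = (∑ i, f i (y i) - μ * ∑ i, g i (y i)) + μ * ∑ i, g i (y i) :=
      (sub_add_cancel _ _).symm
    _ ≤ (∑ i, f i (x i) - μ * ∑ i, g i (x i)) + μ * ∑ i, g i (x i) :=
      add_le_add hLagrangian (mul_le_mul_of_nonneg_left hyg hμ)
    _ = ∑ i, f i (x i) := sub_add_cancel _ _

-- The variational inequality characterizing the projection of `u` onto `[a, c]`.
theorem sub_clamp_mul_clamp_sub_nonneg {R : Type*} [Ring R] [LinearOrder R] [IsOrderedRing R]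
    {a c x : R} (u : R) (hx : x ∈ Icc a c) :
    0 ≤ (x - min (max a u) c) * (min (max a u) c - u) := by
  have hac : a ≤ c := hx.1.trans hx.2
  rcases le_total u a with hua | hau
  · rw [max_eq_left hua, min_eq_left hac]
    exact mul_nonneg (sub_nonneg.2 hx.1) (sub_nonneg.2 hua)
  rcases le_total u c with huc | hcu
  · simp [hau, huc]
  · rw [max_eq_right hau, min_eq_right hcu]
    exact mul_nonneg_of_nonpos_of_nonpos (sub_nonpos.2 hx.2) (sub_nonpos.2 hcu)

/-- The rate `R(E, τ)` of a single user with channel gain `α`, with logarithms to base `b`. -/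
noncomputable def userRate (b τ α E : ℝ) : ℝ :=
  τ * Real.logb b (1 + α * E / τ)

/-- The water-filling energy of a single user with cap `c`, parametrized by the water level
`w = -1 / (λ log b)` instead of the multiplier `λ`. -/
noncomputable def waterfillingEnergy (τ α c w : ℝ) : ℝ :=
  min (max 0 (τ * (w - 1 / α))) c

section SingleUser

variable {b τ α c w : ℝ}

theorem userRate_le_add_div (hb : 1 < b) (hτ : 0 < τ) (hα : 0 < α) {x s : ℝ} (hx : 0 ≤ x)
    (hs : 0 ≤ s) :
    userRate b τ α x ≤ userRate b τ α s + (x - s) / ((1 / α + s / τ) * Real.log b) := by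
  have hX : 0 < 1 + α * x / τ := by positivity
  have hS : 0 < 1 + α * s / τ := by positivity
  have hlog : Real.log (1 + α * x / τ) - Real.log (1 + α * s / τ) ≤
      (1 + α * x / τ) / (1 + α * s / τ) - 1 := by
    rw [← Real.log_div hX.ne' hS.ne']
    exact Real.log_le_sub_one_of_pos (div_pos hX hS)
  have hb' : 0 < Real.log b := Real.log_pos hb
  rw [← sub_le_iff_le_add']
  calc
    userRate b τ α x - userRate b τ α s =
        τ * (Real.log (1 + α * x / τ) - Real.log (1 + α * s / τ)) / Real.log b := by
      simp only [userRate, Real.logb]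
      ring
    _ ≤ τ * ((1 + α * x / τ) / (1 + α * s / τ) - 1) / Real.log b := by gcongr
    _ = (x - s) / ((1 / α + s / τ) * Real.log b) := by
      field_simp
      ring

theorem isMaxOn_userRate_sub_waterfillingEnergy (hb : 1 < b) (hτ : 0 < τ) (hα : 0 < α)
    (hw : 0 < w) :
    IsMaxOn (fun x => userRate b τ α x - 1 / (w * Real.log b) * x) (Icc 0 c)
      (waterfillingEnergy τ α c w) := by
  intro x hx
  set s := waterfillingEnergy τ α c w
  have hs : 0 ≤ s := le_min (le_max_left _ _) (hx.1.trans hx.2)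
  have hb' : 0 < Real.log b := Real.log_pos hb
  have hproj : 0 ≤ (x - s) * (s - τ * (w - 1 / α)) := sub_clamp_mul_clamp_sub_nonneg _ hx
  have hlevel : (x - s) * w ≤ (x - s) * (1 / α + s / τ) := by
    have h := div_nonneg hproj hτ.le
    have : (x - s) * (s - τ * (w - 1 / α)) / τ = (x - s) * (1 / α + s / τ) - (x - s) * w := by
      field_simp
      ring
    linarith
  have hprice : (x - s) / ((1 / α + s / τ) * Real.log b) ≤ (x - s) / (w * Real.log b) := by
    rw [← div_div, ← div_div]
    gcongr ?_ / _
    exact (div_le_div_iff₀ (by positivity) hw).2 hlevel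
  have htangent := userRate_le_add_div hb hτ hα hx.1 hs
  have hsplit : (x - s) / (w * Real.log b) =
      1 / (w * Real.log b) * x - 1 / (w * Real.log b) * s := by ring
  change userRate b τ α x - 1 / (w * Real.log b) * x ≤ userRate b τ α s - 1 / (w * Real.log b) * s
  linarith

theorem waterfillingEnergy_eq_zero (hτ : 0 ≤ τ) (hc : 0 ≤ c) (hw : w ≤ 1 / α) :
    waterfillingEnergy τ α c w = 0 := by
  rw [waterfillingEnergy, max_eq_left (mul_nonpos_of_nonneg_of_nonpos hτ (sub_nonpos.2 hw)),
    min_eq_left hc]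

theorem waterfillingEnergy_eq_cap (hτ : 0 < τ) (hw : 1 / α + c / τ ≤ w) :
    waterfillingEnergy τ α c w = c := by
  have hcw : c ≤ τ * (w - 1 / α) := (div_le_iff₀' hτ).1 (le_sub_iff_add_le'.2 hw)
  exact min_eq_right (le_max_of_le_right hcw)

theorem waterfillingEnergy_neg_one_div (hα : α ≠ 0) (μ : ℝ) :
    waterfillingEnergy τ α c (-(1 / μ)) = min (max 0 (-(τ / α) * (α / μ + 1))) c := by
  have hlevel : τ * (-(1 / μ) - 1 / α) = -(τ / α) * (α / μ + 1) := by
    rw [div_eq_mul_inv α μ, one_div μ]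
    field_simp
    ring
  rw [waterfillingEnergy, hlevel]

end SingleUser

theorem exists_pos_sum_waterfillingEnergy_eq {ι : Type*} [Fintype ι] {τ α c : ι → ℝ} {Emax : ℝ}
    (hτ : ∀ i, 0 < τ i) (hα : ∀ i, 0 < α i) (hc : ∀ i, 0 ≤ c i)
    (hEmax : Emax ∈ Icc 0 (∑ i, c i)) :
    ∃ w, 0 < w ∧ ∑ i, waterfillingEnergy (τ i) (α i) (c i) w = Emax := by
  have hcont : Continuous fun w => ∑ i, waterfillingEnergy (τ i) (α i) (c i) w := by
    unfold waterfillingEnergy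
    fun_prop
  obtain ⟨wlow, hlow, hlow_pos⟩ : ∃ w, (∀ i, w ≤ 1 / α i) ∧ 0 < w :=
    ((eventually_all.2 fun i => eventually_nhdsWithin_of_eventually_nhds
      (eventually_le_nhds (one_div_pos.2 (hα i)))).and
      (eventually_mem_nhdsWithin (a := (0 : ℝ)) (s := Ioi 0))).exists
  obtain ⟨whigh, hhigh, hhigh_pos⟩ : ∃ w, (∀ i, 1 / α i + c i / τ i ≤ w) ∧ 0 < w :=
    ((eventually_all.2 fun i => eventually_ge_atTop (1 / α i + c i / τ i)).and
      (eventually_gt_atTop 0)).exists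
  have hsum_low : ∑ i, waterfillingEnergy (τ i) (α i) (c i) wlow = 0 :=
    Finset.sum_eq_zero fun i _ => waterfillingEnergy_eq_zero (hτ i).le (hc i) (hlow i)
  have hsum_high : ∑ i, waterfillingEnergy (τ i) (α i) (c i) whigh = ∑ i, c i :=
    Finset.sum_congr rfl fun i _ => waterfillingEnergy_eq_cap (hτ i) (hhigh i)
  rw [← hsum_low, ← hsum_high] at hEmax
  exact isPreconnected_Ioi.intermediate_value hlow_pos hhigh_pos hcont.continuousOn hEmax

theorem isMaxOn_sum_userRate_waterfillingEnergy {ι : Type*} [Fintype ι] {τ α c : ι → ℝ} {b w : ℝ}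
    (hb : 1 < b) (hτ : ∀ i, 0 < τ i) (hα : ∀ i, 0 < α i) (hw : 0 < w) :
    IsMaxOn (fun E : ι → ℝ => ∑ i, userRate b (τ i) (α i) (E i))
      {E | (∀ i, E i ∈ Icc 0 (c i)) ∧
        ∑ i, E i ≤ ∑ i, waterfillingEnergy (τ i) (α i) (c i) w}
      fun i => waterfillingEnergy (τ i) (α i) (c i) w :=
  isMaxOn_sum_of_isMaxOn_sub_mul (g := fun _ y => y)
    (one_div_pos.2 (mul_pos hw (Real.log_pos hb))).le
    fun i => isMaxOn_userRate_sub_waterfillingEnergy hb (hτ i) (hα i) hw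

theorem opt_energy_waterfilling_general {ι : Type*} [Fintype ι] {b : ℝ} (hb : 1 < b)
    {τ α c : ι → ℝ} {Emax : ℝ} (hτ : ∀ i, 0 < τ i) (hα : ∀ i, 0 < α i) (hc : ∀ i, 0 ≤ c i)
    (hEmax : Emax ∈ Icc 0 (∑ i, c i)) :
    ∃ lam : ℝ, lam < 0 ∧
      (∑ i, min (max 0 (-(τ i / α i) * (α i / (lam * Real.log b) + 1))) (c i)) = Emax ∧
      ∀ E : ι → ℝ, (∀ i, 0 ≤ E i ∧ E i ≤ c i) → (∑ i, E i) ≤ Emax →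
        (∑ i, τ i * Real.logb b (1 + α i * E i / τ i)) ≤
          ∑ i, τ i * Real.logb b (1 + α i *
            (min (max 0 (-(τ i / α i) * (α i / (lam * Real.log b) + 1))) (c i)) / τ i) := by
  obtain ⟨w, hw, hsum⟩ := exists_pos_sum_waterfillingEnergy_eq hτ hα hc hEmax
  have hb' : 0 < Real.log b := Real.log_pos hb
  have hlevel : w = -(1 / (-(1 / (w * Real.log b)) * Real.log b)) := by field_simp
  refine ⟨-(1 / (w * Real.log b)), neg_neg_of_pos (by positivity), ?_⟩
  simp only [← waterfillingEnergy_neg_one_div (hα _).ne', ← hlevel]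
  exact ⟨hsum, fun E hE hEs =>
    isMaxOn_sum_userRate_waterfillingEnergy hb hτ hα hw ⟨hE, hEs.trans_eq hsum.symm⟩⟩

/-- Second case of Theorem 3 (water-filling): if `0 < E_max < Σᵢ cᵢ`, there
exists a multiplier `λ* < 0` such that the energies
`Eᵢ* = min (max 0 (-(τᵢ/αᵢ)(αᵢ/(λ* ln 2) + 1))) cᵢ` sum to `E_max` and
maximize `Σᵢ τᵢ log₂(1 + αᵢ Eᵢ/τᵢ)` over
`{E : 0 ≤ Eᵢ ≤ cᵢ, Σᵢ Eᵢ ≤ E_max}`. -/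
theorem opt_energy_waterfilling (K : ℕ) (hK : 1 ≤ K) (τ α c : Fin K → ℝ)
    (Emax : ℝ) (hτ : ∀ i, 0 < τ i) (hα : ∀ i, 0 < α i) (hc : ∀ i, 0 < c i)
    (hEmax : 0 < Emax) (hEmax' : Emax < ∑ i, c i) :
    ∃ lam : ℝ, lam < 0 ∧
      (∑ i, min (max 0 (-(τ i / α i) * (α i / (lam * Real.log 2) + 1)))
          (c i)) = Emax ∧
      ∀ E : Fin K → ℝ, (∀ i, 0 ≤ E i ∧ E i ≤ c i) → (∑ i, E i) ≤ Emax →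
        (∑ i, τ i * Real.logb 2 (1 + α i * E i / τ i)) ≤
          ∑ i, τ i * Real.logb 2 (1 + α i *
            (min (max 0 (-(τ i / α i) * (α i / (lam * Real.log 2) + 1)))
              (c i)) / τ i) :=
  opt_energy_waterfilling_general one_lt_two hτ hα (fun i => (hc i).le) ⟨hEmax.le, hEmax'.le⟩
end

section
/- Fix K ≥ 1 and reals γ_i > 0 for i = 1,…,K, set A = Σ_{i=1}^K γ_i, and let x* > 1 be the unique solution of x·ln x − x + 1 = A. Define τ₀* = (x* − 1)/(A + x* − 1) and τ_i* = γ_i/(A + x* − 1) for i = 1,…,K. Then Σ_{i=0}^K τ_i* = 1, all τ_i* > 0, and for every (τ₀, τ₁,…,τ_K) with τ_i ≥ 0 for all i and Σ_{i=0}^K τ_i ≤ 1, one has Σ_{i=1}^K τ_i · log₂(1 + γ_i·τ₀/τ_i) ≤ Σ_{i=1}^K τ_i* · log₂(1 + γ_i·τ₀*/τ_i*), where terms with τ_i = 0 are interpreted as 0. -/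
/-!
For fixed `x ≥ 0` and `y > 0`, the Fenchel–Young inequality for
`klFun x = x log x + 1 - x` reads `x log y ≤ klFun x + y - 1`, with equality at `y = x`.
Applied to `y = 1 + γᵢ τ₀ / τᵢ` and multiplied by `τᵢ`, it bounds the throughput of each user
by a function linear in `(τ₀, τᵢ)`. When `klFun x = ∑ γᵢ`, the sum of these bounds is proportional
to the total time `τ₀ + ∑ τᵢ`, and the bound is attained when `1 + γᵢ τ₀ / τᵢ = x` for every user.
-/

open InformationTheory (klFun)

/-- The throughput, measured with logarithms to base `b`, of a user with channel coefficient `γ`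
that harvests energy during `τ₀` and transmits during `τ`. The junk value `c / 0 = 0`
is harmless, because the factor `τ` vanishes there, as the convention for a silent user requires. -/
noncomputable def throughput (b γ τ₀ τ : ℝ) : ℝ :=
  τ * Real.logb b (1 + γ * τ₀ / τ)

theorem mul_log_le_klFun_add_sub_one {x y : ℝ} (hx : 0 ≤ x) (hy : 0 < y) :
    x * Real.log y ≤ klFun x + (y - 1) := by
  rcases hx.eq_or_lt with rfl | hx
  · simpa [klFun] using hy.le
  · have tangent : Real.log y - Real.log x ≤ y / x - 1 := by
      rw [← Real.log_div hy.ne' hx.ne']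
      exact Real.log_le_sub_one_of_pos (div_pos hy hx)
    calc x * Real.log y = x * Real.log x + x * (Real.log y - Real.log x) := by ring
      _ ≤ x * Real.log x + x * (y / x - 1) := by gcongr
      _ = klFun x + (y - 1) := by rw [klFun]; field_simp; ring

theorem throughput_sub_one_div_div (b x γ D : ℝ) :
    throughput b γ ((x - 1) / D) (γ / D) = γ / D * Real.logb b x := by
  rcases eq_or_ne (γ / D) 0 with h | h
  · simp only [throughput, h, zero_mul]
  · obtain ⟨hγ, hD⟩ := div_ne_zero_iff.mp h
    have snr : 1 + γ * ((x - 1) / D) / (γ / D) = x := by field_simp; ring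
    rw [throughput, snr]

section

variable {b x : ℝ}

theorem throughput_le {γ τ₀ τ : ℝ} (hb : 1 < b) (hx : 0 < x) (hγτ₀ : 0 ≤ γ * τ₀) (hτ : 0 ≤ τ) :
    throughput b γ τ₀ τ ≤ (τ * klFun x + γ * τ₀) / (x * Real.log b) := by
  have hlog : 0 < Real.log b := Real.log_pos hb
  rcases hτ.eq_or_lt with rfl | hτ
  · simp only [throughput, zero_mul, zero_add]
    positivity
  · have young : x * Real.log (1 + γ * τ₀ / τ) ≤ klFun x + γ * τ₀ / τ := by
      simpa using mul_log_le_klFun_add_sub_one hx.le (y := 1 + γ * τ₀ / τ) (by positivity)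
    calc throughput b γ τ₀ τ
        = τ * (x * Real.log (1 + γ * τ₀ / τ)) / (x * Real.log b) := by
          rw [throughput, Real.logb]; field_simp
      _ ≤ τ * (klFun x + γ * τ₀ / τ) / (x * Real.log b) := by gcongr
      _ = (τ * klFun x + γ * τ₀) / (x * Real.log b) := by field_simp

variable {ι : Type*} {s : Finset ι} {γ : ι → ℝ}

theorem sum_throughput_le {τ₀ : ℝ} {τ : ι → ℝ} (hb : 1 < b) (hx : 0 < x)
    (hxγ : klFun x = ∑ i ∈ s, γ i) (hγ : ∀ i ∈ s, 0 ≤ γ i) (hτ₀ : 0 ≤ τ₀)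
    (hτ : ∀ i ∈ s, 0 ≤ τ i) :
    ∑ i ∈ s, throughput b (γ i) τ₀ (τ i) ≤
      (∑ i ∈ s, γ i) / (x * Real.log b) * (τ₀ + ∑ i ∈ s, τ i) :=
  calc ∑ i ∈ s, throughput b (γ i) τ₀ (τ i)
      ≤ ∑ i ∈ s, (τ i * klFun x + γ i * τ₀) / (x * Real.log b) :=
        Finset.sum_le_sum fun i hi =>
          throughput_le hb hx (mul_nonneg (hγ i hi) hτ₀) (hτ i hi)
    _ = (∑ i ∈ s, γ i) / (x * Real.log b) * (τ₀ + ∑ i ∈ s, τ i) := by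
        rw [← Finset.sum_div, Finset.sum_add_distrib, ← Finset.sum_mul, ← Finset.sum_mul, hxγ]
        ring

theorem sum_add_sub_one_eq_mul_log (hxγ : klFun x = ∑ i ∈ s, γ i) :
    ∑ i ∈ s, γ i + x - 1 = x * Real.log x := by
  rw [← hxγ, klFun]
  ring

theorem sum_throughput_optimal (hx : 1 < x) (hxγ : klFun x = ∑ i ∈ s, γ i) :
    ∑ i ∈ s, throughput b (γ i) ((x - 1) / (∑ j ∈ s, γ j + x - 1))
        (γ i / (∑ j ∈ s, γ j + x - 1)) =
      (∑ i ∈ s, γ i) / (x * Real.log b) := by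
  have hlog : Real.log x ≠ 0 := (Real.log_pos hx).ne'
  simp only [throughput_sub_one_div_div]
  rw [← Finset.sum_mul, ← Finset.sum_div, sum_add_sub_one_eq_mul_log hxγ, Real.logb]
  field_simp

theorem sum_throughput_le_sum_throughput_optimal {τ₀ : ℝ} {τ : ι → ℝ} (hb : 1 < b) (hx : 1 < x)
    (hxγ : klFun x = ∑ i ∈ s, γ i) (hγ : ∀ i ∈ s, 0 ≤ γ i) (hτ₀ : 0 ≤ τ₀)
    (hτ : ∀ i ∈ s, 0 ≤ τ i) (hsum : τ₀ + ∑ i ∈ s, τ i ≤ 1) :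
    ∑ i ∈ s, throughput b (γ i) τ₀ (τ i) ≤
      ∑ i ∈ s, throughput b (γ i) ((x - 1) / (∑ j ∈ s, γ j + x - 1))
        (γ i / (∑ j ∈ s, γ j + x - 1)) := by
  have hx₀ : 0 < x := one_pos.trans hx
  have hrate : 0 ≤ (∑ i ∈ s, γ i) / (x * Real.log b) :=
    div_nonneg (Finset.sum_nonneg hγ) (mul_pos hx₀ (Real.log_pos hb)).le
  rw [sum_throughput_optimal hx hxγ]
  exact (sum_throughput_le hb hx₀ hxγ hγ hτ₀ hτ).trans (mul_le_of_le_one_right hrate hsum)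

end

/-- Closed-form optimal time allocation of problem P3 (WPCNs with RF energy
harvesting nodes only, equation (11)): with `A = Σᵢ γᵢ` and `x* > 1` the
solution of `x ln x - x + 1 = A`, the allocation
`τ₀* = (x*-1)/(A+x*-1)`, `τᵢ* = γᵢ/(A+x*-1)` sums to one, is positive, and
maximizes `Σᵢ τᵢ log₂(1 + γᵢ τ₀ / τᵢ)` over all nonnegative `τ` with
`Σ_{i=0}^K τᵢ ≤ 1`.  (`τ 0` is the harvesting time; user `i` transmits during
`τ i.succ`; in Lean `τ * Real.logb 2 (1 + c / τ)` equals `0` at `τ = 0`.) -/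
theorem P3_opt_time_allocation (K : ℕ) (hK : 1 ≤ K) (γ : Fin K → ℝ)
    (hγ : ∀ i, 0 < γ i) (x : ℝ) (hx : 1 < x)
    (hxeq : x * Real.log x - x + 1 = ∑ i, γ i)
    (τstar : Fin (K + 1) → ℝ)
    (hτ0 : τstar 0 = (x - 1) / ((∑ i, γ i) + x - 1))
    (hτi : ∀ i : Fin K, τstar i.succ = γ i / ((∑ i, γ i) + x - 1)) :
    (∑ i, τstar i) = 1 ∧ (∀ i, 0 < τstar i) ∧
    ∀ τ : Fin (K + 1) → ℝ, (∀ i, 0 ≤ τ i) → (∑ i, τ i) ≤ 1 →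
      (∑ i : Fin K, τ i.succ * Real.logb 2 (1 + γ i * τ 0 / τ i.succ)) ≤
        ∑ i : Fin K,
          τstar i.succ * Real.logb 2 (1 + γ i * τstar 0 / τstar i.succ) := by
  have hxγ : klFun x = ∑ i, γ i := by rw [← hxeq, klFun]; ring
  have hD : 0 < (∑ i, γ i) + x - 1 := by
    rw [sum_add_sub_one_eq_mul_log hxγ]
    exact mul_pos (one_pos.trans hx) (Real.log_pos hx)
  refine ⟨?_, Fin.forall_fin_succ.mpr ⟨?_, fun i => ?_⟩, fun τ hτ hsum => ?_⟩
  · simp only [Fin.sum_univ_succ, hτ0, hτi]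
    rw [← Finset.sum_div, ← add_div, div_eq_one_iff_eq hD.ne']
    ring
  · rw [hτ0]
    exact div_pos (sub_pos.mpr hx) hD
  · rw [hτi]
    exact div_pos (hγ i) hD
  · rw [Fin.sum_univ_succ] at hsum
    simp only [hτ0, hτi]
    exact sum_throughput_le_sum_throughput_optimal one_lt_two hx hxγ (fun i _ => (hγ i).le)
      (hτ 0) (fun i _ => hτ i.succ) hsum
end

section
/- Fix integers M ≥ 1, N ≥ 1 and reals γ_i > 0 (i = 1,…,M), θ_j > 0 (j = 1,…,N), a > 0, E_max > 0; set A₁ = Σ_i γ_i and A₂ = Σ_j θ_j. Assume either (i) N·A₁ < a·A₂, or (ii) N·A₁ > a·A₂ and A₂·E_max ≥ N·(x₁* − 1), where x₁* > 1 is the unique solution of x·ln x − x + 1 = A₁ − (a/N)·A₂. Then the allocation τ₀ = 0, τ_{1,i} = 0 for all i, τ_{2,j} = θ_j/A₂ for all j, and Ē = E_max/N is feasible and maximizes Σ_{i=1}^M τ_{1,i}·log₂(1 + γ_i·τ₀/τ_{1,i}) + Σ_{j=1}^N τ_{2,j}·log₂(1 + θ_j·Ē/τ_{2,j}) over all (τ₀,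 τ_{1,1},…,τ_{1,M}, τ_{2,1},…,τ_{2,N}, Ē) ≥ 0 with τ₀ + Σ_i τ_{1,i} + Σ_j τ_{2,j} ≤ 1 and a·τ₀ + N·Ē ≤ E_max. -/
/-!
By concavity of the logarithm, `log (1 + s / t) ≤ log x + ((1 + s / t) / x - 1)`. Multiplying by
`t` bounds each rate, for every `x > 0`, by `(t * klFun x + s) / x`, where `t` is its duration, `s`
its received energy and `klFun x = x log x + 1 - x`: in units of `1 / x`, time has price `klFun x`
and received energy price `1`. At these prices a unit of harvesting time forgoes `klFun x` of
transmission time and `(a / n) ∑ θⱼ` of legacy energy, and gains `∑ γᵢ`; it does not pay as soon as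
`∑ γᵢ - (a / n) ∑ θⱼ ≤ klFun x`. The resulting bound is attained at `x = 1 + (∑ θⱼ) Emax / n`, the
common value of `1 + s / t` in the all-legacy allocation, and the two cases of the theorem imply
the price inequality at that `x` because `klFun` is nonnegative and increases on `[1, ∞)`.
-/

open InformationTheory

lemma monotoneOn_klFun_Ici_one : MonotoneOn klFun (Set.Ici 1) := by
  refine monotoneOn_of_deriv_nonneg (convex_Ici 1) continuous_klFun.continuousOn ?_ ?_
  · intro x hx
    rw [interior_Ici, Set.mem_Ioi] at hx
    exact (hasDerivAt_klFun (by positivity)).differentiableAt.differentiableWithinAt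
  · intro x hx
    rw [interior_Ici, Set.mem_Ioi] at hx
    simpa only [deriv_klFun] using Real.log_nonneg hx.le

lemma mul_log_one_add_div_le {t s x : ℝ} (ht : 0 ≤ t) (hs : 0 ≤ s) (hx : 0 < x) :
    t * Real.log (1 + s / t) ≤ (t * klFun x + s) / x := by
  rcases ht.eq_or_lt with rfl | ht
  · simpa using div_nonneg hs hx.le
  have hpos : 0 < 1 + s / t := by positivity
  have tangent : Real.log (1 + s / t) ≤ Real.log x + ((1 + s / t) / x - 1) := by
    have h := Real.log_le_sub_one_of_pos (div_pos hpos hx)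
    rw [Real.log_div hpos.ne' hx.ne'] at h
    linarith
  calc t * Real.log (1 + s / t) ≤ t * (Real.log x + ((1 + s / t) / x - 1)) := by gcongr
    _ = (t * klFun x + s) / x := by
      rw [klFun_apply]
      field_simp
      ring

lemma sum_mul_logb_one_add_div_le {ι : Type*} (S : Finset ι) {t s : ι → ℝ} {b x : ℝ}
    (hb : 1 < b) (ht : ∀ i ∈ S, 0 ≤ t i) (hs : ∀ i ∈ S, 0 ≤ s i) (hx : 0 < x) :
    ∑ i ∈ S, t i * Real.logb b (1 + s i / t i) ≤
      ((∑ i ∈ S, t i) * klFun x + ∑ i ∈ S, s i) / (x * Real.log b) := by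
  have hlog : 0 < Real.log b := Real.log_pos hb
  rw [Finset.sum_mul, ← Finset.sum_add_distrib, Finset.sum_div]
  refine Finset.sum_le_sum fun i hi => ?_
  rw [Real.logb, ← mul_div_assoc, ← div_div]
  gcongr
  exact mul_log_one_add_div_le (ht i hi) (hs i hi) hx

lemma sum_mul_logb_one_add_proportional {ι : Type*} (S : Finset ι) {w : ι → ℝ} (b e : ℝ)
    (hsum : ∑ i ∈ S, w i ≠ 0) :
    ∑ i ∈ S, (w i / ∑ k ∈ S, w k) * Real.logb b (1 + w i * e / (w i / ∑ k ∈ S, w k)) =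
      Real.logb b (1 + (∑ i ∈ S, w i) * e) := by
  have hterm (i : ι) :
      (w i / ∑ k ∈ S, w k) * Real.logb b (1 + w i * e / (w i / ∑ k ∈ S, w k)) =
        (w i / ∑ k ∈ S, w k) * Real.logb b (1 + (∑ k ∈ S, w k) * e) := by
    rcases eq_or_ne (w i) 0 with hw | hw
    · simp [hw]
    · congr 3
      field_simp
  simp only [hterm]
  rw [← Finset.sum_mul, ← Finset.sum_div, div_self hsum, one_mul]

lemma sub_div_mul_le_klFun {A₁ A₂ a n e : ℝ} (hn : 0 < n) (hA₂e : 0 ≤ A₂ * e)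
    (h : n * A₁ ≤ a * A₂ ∨
      ∃ x, 1 ≤ x ∧ x * Real.log x - x + 1 = A₁ - a / n * A₂ ∧ n * (x - 1) ≤ A₂ * e) :
    A₁ - a / n * A₂ ≤ klFun (1 + A₂ * (e / n)) := by
  have hX : 1 ≤ 1 + A₂ * (e / n) := by
    rw [← mul_div_assoc]
    linarith [div_nonneg hA₂e hn.le]
  rcases h with hle | ⟨x, hx, hroot, hbudget⟩
  · have hA₁ : A₁ ≤ a / n * A₂ := by
      rw [div_mul_eq_mul_div, le_div_iff₀ hn]
      linarith
    linarith [klFun_nonneg (zero_le_one.trans hX)]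
  · have hxX : x ≤ 1 + A₂ * (e / n) := by
      rw [← mul_div_assoc, ← sub_le_iff_le_add', le_div_iff₀ hn]
      linarith
    calc A₁ - a / n * A₂ = klFun x := by rw [← hroot, klFun_apply]; ring
      _ ≤ klFun (1 + A₂ * (e / n)) := monotoneOn_klFun_Ici_one hx hX hxX

/-- The decision variables of problem P4, with Type I users indexed by `ι` and Type II users by
`κ`: the durations `τ₀` of the harvesting phase, `τ₁ i` and `τ₂ j` of the transmissions, and the
energy `Ebar` spent by each Type II user. -/
structure P4Allocation (ι κ : Type*) where
  τ₀ : ℝ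
  τ₁ : ι → ℝ
  τ₂ : κ → ℝ
  Ebar : ℝ

namespace P4Allocation

variable {ι κ : Type*} [Fintype ι] [Fintype κ]

/-- The feasible set of problem P4: sign, slot and energy constraints. The number of Type II users
enters the energy constraint as a real coefficient `n`. -/
def feasibleSet (ι κ : Type*) [Fintype ι] [Fintype κ] (a n Emax : ℝ) : Set (P4Allocation ι κ) :=
  {p | 0 ≤ p.τ₀ ∧ (∀ i, 0 ≤ p.τ₁ i) ∧ (∀ j, 0 ≤ p.τ₂ j) ∧ 0 ≤ p.Ebar ∧
    p.τ₀ + ∑ i, p.τ₁ i + ∑ j, p.τ₂ j ≤ 1 ∧ a * p.τ₀ + n * p.Ebar ≤ Emax}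

/-- The objective of problem P4. A rate term with zero duration vanishes, whatever the junk value
of the logarithm it is multiplied with. -/
noncomputable def throughput (γ : ι → ℝ) (θ : κ → ℝ) (p : P4Allocation ι κ) : ℝ :=
  ∑ i, p.τ₁ i * Real.logb 2 (1 + γ i * p.τ₀ / p.τ₁ i) +
    ∑ j, p.τ₂ j * Real.logb 2 (1 + θ j * p.Ebar / p.τ₂ j)

/-- The allocation of the third regime: no harvesting, and the whole slot shared among the Type II
users in proportion to their gains `θ`. -/
noncomputable def allLegacy (ι : Type*) (θ : κ → ℝ) (n Emax : ℝ) : P4Allocation ι κ where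
  τ₀ := 0
  τ₁ _ := 0
  τ₂ j := θ j / ∑ k, θ k
  Ebar := Emax / n

lemma allLegacy_mem_feasibleSet {θ : κ → ℝ} {n Emax : ℝ} (a : ℝ) (hθ : ∀ j, 0 ≤ θ j)
    (hn : 0 < n) (hEmax : 0 ≤ Emax) :
    allLegacy ι θ n Emax ∈ feasibleSet ι κ a n Emax := by
  refine ⟨le_rfl, fun _ => le_rfl, fun j => div_nonneg (hθ j) (Finset.sum_nonneg fun k _ => hθ k),
    div_nonneg hEmax hn.le, ?_, ?_⟩
  · simpa [allLegacy, ← Finset.sum_div] using div_self_le_one (∑ k, θ k)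
  · simp [allLegacy, mul_div_cancel₀ Emax hn.ne']

lemma throughput_allLegacy (γ : ι → ℝ) {θ : κ → ℝ} (n Emax : ℝ) (hsum : ∑ j, θ j ≠ 0) :
    throughput γ θ (allLegacy ι θ n Emax) = Real.logb 2 (1 + (∑ j, θ j) * (Emax / n)) := by
  simpa [throughput, allLegacy] using
    sum_mul_logb_one_add_proportional Finset.univ 2 (Emax / n) hsum

/-- Weak duality: `klFun x / (x * log 2)` is the price of time, `1 / (x * log 2)` that of received
energy. -/
lemma throughput_le {γ : ι → ℝ} {θ : κ → ℝ} {a n Emax x : ℝ} (hγ : ∀ i, 0 ≤ γ i)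
    (hθ : ∀ j, 0 ≤ θ j) (hn : 0 < n) (hx : 0 < x)
    (hprice : ∑ i, γ i - a / n * ∑ j, θ j ≤ klFun x)
    {p : P4Allocation ι κ} (hp : p ∈ feasibleSet ι κ a n Emax) :
    throughput γ θ p ≤ (klFun x + (∑ j, θ j) * (Emax / n)) / (x * Real.log 2) := by
  obtain ⟨hτ₀, hτ₁, hτ₂, hEbar, htime, henergy⟩ := hp
  have htypeI := sum_mul_logb_one_add_div_le Finset.univ one_lt_two (fun i _ => hτ₁ i)
    (fun i _ => mul_nonneg (hγ i) hτ₀) hx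
  have htypeII := sum_mul_logb_one_add_div_le Finset.univ one_lt_two (fun j _ => hτ₂ j)
    (fun j _ => mul_nonneg (hθ j) hEbar) hx
  refine (add_le_add htypeI htypeII).trans ?_
  rw [← add_div, ← Finset.sum_mul, ← Finset.sum_mul]
  refine div_le_div_of_nonneg_right ?_ (by positivity)
  have htimeCost : (∑ i, p.τ₁ i + ∑ j, p.τ₂ j) * klFun x ≤ (1 - p.τ₀) * klFun x :=
    mul_le_mul_of_nonneg_right (by linarith) (klFun_nonneg hx.le)
  have hEbar_le : p.Ebar ≤ Emax / n - a / n * p.τ₀ := by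
    rw [div_mul_eq_mul_div, ← sub_div, le_div_iff₀ hn]
    linarith
  have henergyCost : (∑ j, θ j) * p.Ebar ≤ (∑ j, θ j) * (Emax / n - a / n * p.τ₀) :=
    mul_le_mul_of_nonneg_left hEbar_le (Finset.sum_nonneg fun j _ => hθ j)
  have hharvest : p.τ₀ * (∑ i, γ i - a / n * ∑ j, θ j) ≤ p.τ₀ * klFun x :=
    mul_le_mul_of_nonneg_left hprice hτ₀
  linarith

lemma isMaxOn_throughput_allLegacy {γ : ι → ℝ} {θ : κ → ℝ} {a n Emax : ℝ}
    (hγ : ∀ i, 0 ≤ γ i) (hθ : ∀ j, 0 ≤ θ j) (hsum : 0 < ∑ j, θ j) (hn : 0 < n)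
    (hEmax : 0 ≤ Emax)
    (hprice : ∑ i, γ i - a / n * ∑ j, θ j ≤ klFun (1 + (∑ j, θ j) * (Emax / n))) :
    IsMaxOn (throughput γ θ) (feasibleSet ι κ a n Emax) (allLegacy ι θ n Emax) := by
  intro p hp
  have hX : 0 < 1 + (∑ j, θ j) * (Emax / n) := by positivity
  calc throughput γ θ p
      ≤ (klFun (1 + (∑ j, θ j) * (Emax / n)) + (∑ j, θ j) * (Emax / n)) /
          ((1 + (∑ j, θ j) * (Emax / n)) * Real.log 2) :=
        throughput_le hγ hθ hn hX hprice hp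
    _ = Real.logb 2 (1 + (∑ j, θ j) * (Emax / n)) := by
        have hbound (x : ℝ) : klFun (1 + x) + x = (1 + x) * Real.log (1 + x) := by
          rw [klFun_apply]
          ring
        rw [hbound, mul_div_mul_left _ _ hX.ne', Real.logb]
    _ = throughput γ θ (allLegacy ι θ n Emax) :=
        (throughput_allLegacy γ n Emax hsum.ne').symm

end P4Allocation

open P4Allocation

/-- The price inequality also covers the boundary `n * ∑ γᵢ = a * ∑ θⱼ` between the two cases. -/
theorem P4_opt_all_legacy_general {ι κ : Type*} [Fintype ι] [Fintype κ]
    {γ : ι → ℝ} {θ : κ → ℝ} {a n Emax : ℝ} (hγ : ∀ i, 0 ≤ γ i) (hθ : ∀ j, 0 ≤ θ j)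
    (hsum : 0 < ∑ j, θ j) (hn : 0 < n) (hEmax : 0 ≤ Emax)
    (hprice : ∑ i, γ i - a / n * ∑ j, θ j ≤ klFun (1 + (∑ j, θ j) * (Emax / n))) :
    allLegacy ι θ n Emax ∈ feasibleSet ι κ a n Emax ∧
      IsMaxOn (throughput γ θ) (feasibleSet ι κ a n Emax) (allLegacy ι θ n Emax) :=
  ⟨allLegacy_mem_feasibleSet a hθ hn hEmax,
    isMaxOn_throughput_allLegacy hγ hθ hsum hn hEmax hprice⟩

/-- Third regime of Theorem 3 of the paper (all resources to the legacy,
Type II, nodes): if either `N A₁ < a A₂`, or `N A₁ > a A₂` and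
`A₂ E_max ≥ N (x₁* - 1)` for the unique `x₁* > 1` solving
`x ln x - x + 1 = A₁ - (a/N) A₂`, then the allocation `τ₀ = 0`,
`τ_{1,i} = 0`, `τ_{2,j} = θⱼ/A₂`, `Ē = E_max/N` is feasible and maximizes
the sum throughput of problem P4.  (In Lean,
`τ * Real.logb 2 (1 + c / τ)` equals `0` at `τ = 0`.) -/
theorem P4_opt_all_legacy (M N : ℕ) (hM : 1 ≤ M) (hN : 1 ≤ N)
    (γ : Fin M → ℝ) (θ : Fin N → ℝ) (a Emax : ℝ)
    (hγ : ∀ i, 0 < γ i) (hθ : ∀ j, 0 < θ j) (ha : 0 < a) (hEmax : 0 < Emax)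
    (hcase : (N : ℝ) * (∑ i, γ i) < a * (∑ j, θ j) ∨
      ((N : ℝ) * (∑ i, γ i) > a * (∑ j, θ j) ∧
        ∃ x₁ : ℝ, 1 < x₁ ∧
          x₁ * Real.log x₁ - x₁ + 1 =
            (∑ i, γ i) - (a / (N : ℝ)) * (∑ j, θ j) ∧
          (∑ j, θ j) * Emax ≥ (N : ℝ) * (x₁ - 1))) :
    ((0:ℝ) ≤ 0 ∧ (∀ i : Fin M, (0:ℝ) ≤ 0) ∧
      (∀ j, 0 ≤ θ j / ∑ k, θ k) ∧ 0 ≤ Emax / (N : ℝ) ∧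
      (0:ℝ) + (∑ _i : Fin M, (0:ℝ)) + (∑ j, θ j / ∑ k, θ k) ≤ 1 ∧
      a * 0 + (N : ℝ) * (Emax / (N : ℝ)) ≤ Emax) ∧
    ∀ (τ0 : ℝ) (τ1 : Fin M → ℝ) (τ2 : Fin N → ℝ) (Ebar : ℝ),
      0 ≤ τ0 → (∀ i, 0 ≤ τ1 i) → (∀ j, 0 ≤ τ2 j) → 0 ≤ Ebar →
      τ0 + (∑ i, τ1 i) + (∑ j, τ2 j) ≤ 1 →
      a * τ0 + (N : ℝ) * Ebar ≤ Emax →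
      (∑ i, τ1 i * Real.logb 2 (1 + γ i * τ0 / τ1 i)) +
          (∑ j, τ2 j * Real.logb 2 (1 + θ j * Ebar / τ2 j)) ≤
        (∑ _i : Fin M, (0:ℝ) * Real.logb 2 (1 + γ _i * 0 / (0:ℝ))) +
          ∑ j, (θ j / ∑ k, θ k) *
            Real.logb 2 (1 + θ j * (Emax / (N : ℝ)) / (θ j / ∑ k, θ k)) := by
  have : NeZero N := ⟨by lia⟩
  have hN₀ : (0 : ℝ) < N := by exact_mod_cast hN
  have hsum : 0 < ∑ j, θ j := Finset.sum_pos (fun j _ => hθ j) Finset.univ_nonempty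
  have hprice := sub_div_mul_le_klFun hN₀ (mul_nonneg hsum.le hEmax.le)
    (hcase.imp le_of_lt fun h => h.2.imp fun _ => And.imp_left le_of_lt)
  obtain ⟨hfeasible, hmax⟩ :=
    P4_opt_all_legacy_general (fun i => (hγ i).le) (fun j => (hθ j).le) hsum hN₀ hEmax.le hprice
  exact ⟨hfeasible, fun τ₀ τ₁ τ₂ Ebar hτ₀ hτ₁ hτ₂ hEbar htime henergy =>
    hmax (a := ⟨τ₀, τ₁, τ₂, Ebar⟩) ⟨hτ₀, hτ₁, hτ₂, hEbar, htime, henergy⟩⟩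
end

section
/- Fix integers M ≥ 1, N ≥ 1 and reals γ_i > 0 (i = 1,…,M), θ_j > 0 (j = 1,…,N), a > 0, E_max > 0; set A₁ = Σ_i γ_i, A₂ = Σ_j θ_j, assume N·A₁ > a·A₂, and let x₁* > 1 be the unique solution of x·ln x − x + 1 = A₁ − (a/N)·A₂. Assume a·(x₁* − 1)/(A₁ + x₁* − 1) ≤ E_max ≤ N·(x₁* − 1)/A₂, and let D = N·(x₁* − 1 + A₁) − a·A₂ (which is > 0). Then the allocation τ₀* = (N·(x₁* − 1) − E_max·A₂)/D, τ_{1,i}* = γ_i·(N·(x₁* − 1) − E_max·A₂)/((x₁* − 1)·D), τ_{2,j}* = θ_j·(E_max·(x₁* − 1 + A₁) − a·(x₁* − 1))/((x₁* − 1)·D), and Ē* = (E_max·(x₁* − 1 + A₁) − a·(x₁* − 1))/D is feasible and maximizes Σ_{i=1}^M τ_{1,i}·log₂(1 + γ_i·τ₀/τ_{1,i}) + Σ_{j=1}^N τ_{2,j}·log₂(1 + θ_j·Ē/τ_{2,j}) over all (τ₀, τ_{1,1},…,τ_{1,M}, τ_{2,1},…,τ_{2,N}, Ē) ≥ 0 with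 τ₀ + Σ_i τ_{1,i} + Σ_j τ_{2,j} ≤ 1 and a·τ₀ + N·Ē ≤ E_max. -/
/-!
P4 is a concave program, and the argument is Lagrangian duality. The tangent of `log` at `x` bounds
`τ log (1 + c / τ)` by an affine function of `(τ, c)`, with equality when `τ = c / (x - 1)`. Summing
over all users bounds the throughput by a linear form in `τ₀`, the `τ`s and `E`; the equation
`x log x - x + 1 = A₁ - (a / N) A₂` says exactly that this form is a nonnegative combination of the
slot duration and the consumed energy. An allocation that gives every user the time `c / (x - 1)`
and makes both constraints tight is therefore optimal, and solving these two tightness equations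
for `τ₀` and `E` yields the closed form.
-/

open Real Finset

/-- The slot price: the Lagrange multiplier of the slot constraint, for rates in base-`β` units,
when every active user has `1 + SNR = x`. -/
noncomputable def slotPrice (β x : ℝ) : ℝ := (log x - 1 + 1 / x) / log β

theorem slotPrice_nonneg {β x : ℝ} (hβ : 1 < β) (hx : 0 < x) : 0 ≤ slotPrice β x := by
  have hlog : 1 - x⁻¹ ≤ log x := one_sub_inv_le_log_of_pos hx
  refine div_nonneg ?_ (log_pos hβ).le
  rw [one_div]
  linarith

theorem mul_logb_one_add_div_le {β x τ c : ℝ} (hβ : 1 < β) (hx : 0 < x) (hτ : 0 ≤ τ)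
    (hc : 0 ≤ c) :
    τ * logb β (1 + c / τ) ≤ τ * slotPrice β x + c / (x * log β) := by
  have hlogβ : 0 < log β := log_pos hβ
  rcases hτ.eq_or_lt with rfl | hτ
  · simp only [zero_mul, zero_add]
    positivity
  · have hpos : 0 < 1 + c / τ := by positivity
    have tangent : log (1 + c / τ) ≤ log x - 1 + (1 + c / τ) / x := by
      have h := log_le_sub_one_of_pos (div_pos hpos hx)
      rw [log_div hpos.ne' hx.ne'] at h
      linarith
    calc τ * logb β (1 + c / τ)
        ≤ τ * ((log x - 1 + (1 + c / τ) / x) / log β) := by rw [logb]; gcongr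
      _ = τ * slotPrice β x + c / (x * log β) := by rw [slotPrice]; field_simp; ring

theorem mul_logb_one_add_div_eq {x : ℝ} (β c : ℝ) (hx : 1 < x) :
    c / (x - 1) * logb β (1 + c / (c / (x - 1))) =
      c / (x - 1) * slotPrice β x + c / (x * log β) := by
  have hx₁ : x - 1 ≠ 0 := (sub_pos.2 hx).ne'
  have hx₀ : x ≠ 0 := (zero_lt_one.trans hx).ne'
  rcases eq_or_ne c 0 with rfl | hc
  · simp only [zero_div, zero_mul, add_zero]
  · rw [div_div_cancel₀ hc, add_sub_cancel, logb, slotPrice]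
    field_simp
    ring

/-- The sum rate, in base-`β` units, of a group of users: user `i` transmits for time `τ i` with
energy `c i`, measured relative to the noise. A user with `τ i = 0` contributes `0`, since division
by zero gives `0` and so `logb` is taken at `1`. -/
noncomputable def sumRate {ι : Type*} [Fintype ι] (β : ℝ) (c τ : ι → ℝ) : ℝ :=
  ∑ i, τ i * logb β (1 + c i / τ i)

section SumRate

variable {ι : Type*} [Fintype ι] {β x : ℝ} {c τ : ι → ℝ}

theorem sumRate_le (hβ : 1 < β) (hx : 0 < x) (hτ : ∀ i, 0 ≤ τ i) (hc : ∀ i, 0 ≤ c i) :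
    sumRate β c τ ≤ (∑ i, τ i) * slotPrice β x + (∑ i, c i) / (x * log β) := by
  rw [sum_mul, sum_div, ← sum_add_distrib]
  exact sum_le_sum fun i _ => mul_logb_one_add_div_le hβ hx (hτ i) (hc i)

theorem sumRate_eq (hx : 1 < x) (hτ : ∀ i, τ i = c i / (x - 1)) :
    sumRate β c τ = (∑ i, τ i) * slotPrice β x + (∑ i, c i) / (x * log β) := by
  rw [sum_mul, sum_div, ← sum_add_distrib]
  refine sum_congr rfl fun i _ => ?_
  rw [hτ i]
  exact mul_logb_one_add_div_eq β (c i) hx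

end SumRate

/-- A decision variable of P4: the harvesting time `τ₀`, the transmission times `τ₁` of the Type I
users `ι` and `τ₂` of the Type II users `κ`, and the energy `E` (the paper's `Ē`) consumed by each
Type II user. -/
structure Allocation (ι κ : Type*) where
  τ₀ : ℝ
  τ₁ : ι → ℝ
  τ₂ : κ → ℝ
  E : ℝ

namespace Allocation

variable {ι κ : Type*} [Fintype ι] [Fintype κ]

/-- The part of the unit slot that an allocation uses. -/
def duration (p : Allocation ι κ) : ℝ := p.τ₀ + ∑ i, p.τ₁ i + ∑ j, p.τ₂ j

/-- The system energy consumption, where `b` is the cost of one unit of `E`. The paper has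
`b = N`, the number of Type II users; here `b` is independent of `κ`. -/
def energy (a b : ℝ) (p : Allocation ι κ) : ℝ := a * p.τ₀ + b * p.E

/-- Feasibility for P4. -/
def IsFeasible (a b Emax : ℝ) (p : Allocation ι κ) : Prop :=
  0 ≤ p.τ₀ ∧ (∀ i, 0 ≤ p.τ₁ i) ∧ (∀ j, 0 ≤ p.τ₂ j) ∧ 0 ≤ p.E ∧
    p.duration ≤ 1 ∧ p.energy a b ≤ Emax

/-- The objective of P4, with rates in base-`β` units. -/
noncomputable def throughput (β : ℝ) (γ : ι → ℝ) (θ : κ → ℝ) (p : Allocation ι κ) : ℝ :=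
  sumRate β (fun i => γ i * p.τ₀) p.τ₁ + sumRate β (fun j => θ j * p.E) p.τ₂

/-- The Lagrangian bound on the throughput: the duration and the energy of `p`, charged at the slot
price and at the energy price `(∑ j, θ j) / (b x log β)`. -/
noncomputable def cost (β a b x : ℝ) (θ : κ → ℝ) (p : Allocation ι κ) : ℝ :=
  slotPrice β x * p.duration + (∑ j, θ j) / (b * x * log β) * p.energy a b

section Duality

variable {β a b x Emax : ℝ} {γ : ι → ℝ} {θ : κ → ℝ} {p q : Allocation ι κ}

theorem cost_eq (hb : b ≠ 0) (hx : x ≠ 0)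
    (hroot : x * log x - x + 1 = ∑ i, γ i - a / b * ∑ j, θ j) :
    p.cost β a b x θ =
      ((∑ i, p.τ₁ i) * slotPrice β x + (∑ i, γ i * p.τ₀) / (x * log β)) +
        ((∑ j, p.τ₂ j) * slotPrice β x + (∑ j, θ j * p.E) / (x * log β)) := by
  have hγ : ∑ i, γ i = x * (log x - 1 + 1 / x) + a / b * ∑ j, θ j := by
    rw [← sub_eq_iff_eq_add, ← hroot]
    field_simp
  rw [← sum_mul, ← sum_mul, hγ, cost, duration, energy, slotPrice]
  field_simp
  ring

theorem throughput_le_cost (hβ : 1 < β) (hb : b ≠ 0) (hx : 0 < x) (hγ : ∀ i, 0 ≤ γ i)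
    (hθ : ∀ j, 0 ≤ θ j) (hroot : x * log x - x + 1 = ∑ i, γ i - a / b * ∑ j, θ j)
    (h₀ : 0 ≤ p.τ₀) (h₁ : ∀ i, 0 ≤ p.τ₁ i) (h₂ : ∀ j, 0 ≤ p.τ₂ j) (hE : 0 ≤ p.E) :
    p.throughput β γ θ ≤ p.cost β a b x θ := by
  rw [cost_eq hb hx.ne' hroot]
  exact add_le_add (sumRate_le hβ hx h₁ fun i => mul_nonneg (hγ i) h₀)
    (sumRate_le hβ hx h₂ fun j => mul_nonneg (hθ j) hE)

theorem throughput_eq_cost (hb : b ≠ 0) (hx : 1 < x)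
    (hroot : x * log x - x + 1 = ∑ i, γ i - a / b * ∑ j, θ j)
    (hτ₁ : ∀ i, p.τ₁ i = γ i * p.τ₀ / (x - 1)) (hτ₂ : ∀ j, p.τ₂ j = θ j * p.E / (x - 1)) :
    p.throughput β γ θ = p.cost β a b x θ := by
  rw [cost_eq hb (zero_lt_one.trans hx).ne' hroot, throughput, sumRate_eq hx hτ₁,
    sumRate_eq hx hτ₂]

theorem cost_le_cost (hβ : 1 < β) (hb : 0 < b) (hx : 0 < x) (hθ : ∀ j, 0 ≤ θ j)
    (hduration : p.duration ≤ q.duration) (henergy : p.energy a b ≤ q.energy a b) :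
    p.cost β a b x θ ≤ q.cost β a b x θ := by
  have hslot : 0 ≤ slotPrice β x := slotPrice_nonneg hβ hx
  have hprice : 0 ≤ (∑ j, θ j) / (b * x * log β) :=
    div_nonneg (sum_nonneg fun j _ => hθ j) (mul_pos (mul_pos hb hx) (log_pos hβ)).le
  unfold cost
  gcongr

theorem isMaxOn_throughput (hβ : 1 < β) (hb : 0 < b) (hx : 1 < x) (hγ : ∀ i, 0 ≤ γ i)
    (hθ : ∀ j, 0 ≤ θ j) (hroot : x * log x - x + 1 = ∑ i, γ i - a / b * ∑ j, θ j)
    (hτ₁ : ∀ i, q.τ₁ i = γ i * q.τ₀ / (x - 1)) (hτ₂ : ∀ j, q.τ₂ j = θ j * q.E / (x - 1))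
    (hduration : q.duration = 1) (henergy : q.energy a b = Emax) :
    IsMaxOn (throughput β γ θ) {p | p.IsFeasible a b Emax} q := by
  have hx₀ : 0 < x := zero_lt_one.trans hx
  rw [isMaxOn_iff]
  rintro p ⟨h₀, h₁, h₂, hE, hp_duration, hp_energy⟩
  calc p.throughput β γ θ
      ≤ p.cost β a b x θ := throughput_le_cost hβ hb.ne' hx₀ hγ hθ hroot h₀ h₁ h₂ hE
    _ ≤ q.cost β a b x θ :=
        cost_le_cost hβ hb hx₀ hθ (hduration ▸ hp_duration) (henergy ▸ hp_energy)
    _ = q.throughput β γ θ := (throughput_eq_cost hb.ne' hx hroot hτ₁ hτ₂).symm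

end Duality

end Allocation

/-- The paper's `D`: the determinant of the two linear equations for `τ₀` and `E` that make the slot
and the energy constraint tight, the slot equation being multiplied by `x - 1`. -/
def middleDenom {ι κ : Type*} [Fintype ι] [Fintype κ] (a b x : ℝ) (γ : ι → ℝ) (θ : κ → ℝ) : ℝ :=
  b * (x - 1 + ∑ i, γ i) - a * ∑ j, θ j

/-- The closed-form allocation (16)–(19), in which both node types are active. -/
noncomputable def middleAllocation {ι κ : Type*} [Fintype ι] [Fintype κ] (a b Emax x : ℝ)
    (γ : ι → ℝ) (θ : κ → ℝ) : Allocation ι κ where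
  τ₀ := (b * (x - 1) - Emax * ∑ j, θ j) / middleDenom a b x γ θ
  τ₁ i := γ i * (b * (x - 1) - Emax * ∑ j, θ j) / ((x - 1) * middleDenom a b x γ θ)
  τ₂ j := θ j * (Emax * (x - 1 + ∑ i, γ i) - a * (x - 1)) / ((x - 1) * middleDenom a b x γ θ)
  E := (Emax * (x - 1 + ∑ i, γ i) - a * (x - 1)) / middleDenom a b x γ θ

section MiddleAllocation

variable {ι κ : Type*} [Fintype ι] [Fintype κ] {a b Emax x : ℝ} {γ : ι → ℝ} {θ : κ → ℝ}

theorem middleDenom_pos (hb : 0 < b) (hx : 1 < x)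
    (hroot : x * log x - x + 1 = ∑ i, γ i - a / b * ∑ j, θ j) : 0 < middleDenom a b x γ θ := by
  have hdenom : middleDenom a b x γ θ = b * (x * log x) := by
    have hγ : ∑ i, γ i = x * log x - x + 1 + a / b * ∑ j, θ j := by rw [hroot]; ring
    rw [middleDenom, hγ]
    field_simp
    ring
  rw [hdenom]
  exact mul_pos hb (mul_pos (zero_lt_one.trans hx) (log_pos hx))

theorem middleAllocation_τ₁ (i : ι) :
    (middleAllocation a b Emax x γ θ).τ₁ i =
      γ i * (middleAllocation a b Emax x γ θ).τ₀ / (x - 1) := by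
  simp only [middleAllocation]
  rw [mul_div_assoc', div_div, mul_comm (x - 1)]

theorem middleAllocation_τ₂ (j : κ) :
    (middleAllocation a b Emax x γ θ).τ₂ j =
      θ j * (middleAllocation a b Emax x γ θ).E / (x - 1) := by
  simp only [middleAllocation]
  rw [mul_div_assoc', div_div, mul_comm (x - 1)]

theorem energy_middleAllocation (hD : middleDenom a b x γ θ ≠ 0) :
    (middleAllocation a b Emax x γ θ).energy a b = Emax := by
  simp only [Allocation.energy, middleAllocation]
  field_simp
  rw [middleDenom]
  ring

theorem duration_middleAllocation (hx : x ≠ 1) (hD : middleDenom a b x γ θ ≠ 0) :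
    (middleAllocation a b Emax x γ θ).duration = 1 := by
  have hx₁ : x - 1 ≠ 0 := sub_ne_zero.2 hx
  simp only [Allocation.duration, middleAllocation, ← sum_div, ← sum_mul]
  field_simp
  rw [middleDenom]
  ring

theorem isFeasible_middleAllocation (hx : 1 < x) (hγ : ∀ i, 0 ≤ γ i) (hθ : ∀ j, 0 ≤ θ j)
    (hD : 0 < middleDenom a b x γ θ) (hlo : a * (x - 1) ≤ Emax * (x - 1 + ∑ i, γ i))
    (hhi : Emax * ∑ j, θ j ≤ b * (x - 1)) :
    (middleAllocation a b Emax x γ θ).IsFeasible a b Emax := by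
  have hx₁ : 0 ≤ x - 1 := (sub_pos.2 hx).le
  have hτ₀ : 0 ≤ (middleAllocation a b Emax x γ θ).τ₀ := div_nonneg (sub_nonneg.2 hhi) hD.le
  have hE : 0 ≤ (middleAllocation a b Emax x γ θ).E := div_nonneg (sub_nonneg.2 hlo) hD.le
  refine ⟨hτ₀, fun i => ?_, fun j => ?_, hE, (duration_middleAllocation hx.ne' hD.ne').le,
    (energy_middleAllocation hD.ne').le⟩
  · rw [middleAllocation_τ₁]
    exact div_nonneg (mul_nonneg (hγ i) hτ₀) hx₁
  · rw [middleAllocation_τ₂]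
    exact div_nonneg (mul_nonneg (hθ j) hE) hx₁

theorem P4_opt_middle_regime_general {β : ℝ} (hβ : 1 < β) (hb : 0 < b) (hx : 1 < x)
    (hγ : ∀ i, 0 ≤ γ i) (hθ : ∀ j, 0 ≤ θ j)
    (hroot : x * log x - x + 1 = ∑ i, γ i - a / b * ∑ j, θ j)
    (hlo : a * (x - 1) ≤ Emax * (x - 1 + ∑ i, γ i)) (hhi : Emax * ∑ j, θ j ≤ b * (x - 1)) :
    0 < middleDenom a b x γ θ ∧
    (middleAllocation a b Emax x γ θ).IsFeasible a b Emax ∧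
    IsMaxOn (Allocation.throughput β γ θ) {p | p.IsFeasible a b Emax}
      (middleAllocation a b Emax x γ θ) := by
  have hD : 0 < middleDenom a b x γ θ := middleDenom_pos hb hx hroot
  exact ⟨hD, isFeasible_middleAllocation hx hγ hθ hD hlo hhi,
    Allocation.isMaxOn_throughput hβ hb hx hγ hθ hroot middleAllocation_τ₁ middleAllocation_τ₂
      (duration_middleAllocation hx.ne' hD.ne') (energy_middleAllocation hD.ne')⟩

end MiddleAllocation

/-- Middle regime of Theorem 3 of the paper (equations (16)–(19), both node
types active): with `A₁ = Σᵢ γᵢ`, `A₂ = Σⱼ θⱼ`, `N A₁ > a A₂`, `x₁* > 1` the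
unique solution of `x ln x - x + 1 = A₁ - (a/N) A₂`, and
`a (x₁*-1)/(A₁+x₁*-1) ≤ E_max ≤ N (x₁*-1)/A₂`, the denominator
`D = N (x₁*-1+A₁) - a A₂` is positive and the displayed allocation is
feasible and maximizes the sum throughput of problem P4.  (In Lean,
`τ * Real.logb 2 (1 + c / τ)` equals `0` at `τ = 0`.) -/
theorem P4_opt_middle_regime (M N : ℕ) (hM : 1 ≤ M) (hN : 1 ≤ N)
    (γ : Fin M → ℝ) (θ : Fin N → ℝ) (a Emax : ℝ)
    (hγ : ∀ i, 0 < γ i) (hθ : ∀ j, 0 < θ j) (ha : 0 < a) (hEmax : 0 < Emax)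
    (A₁ A₂ x₁ D : ℝ) (hA₁ : A₁ = ∑ i, γ i) (hA₂ : A₂ = ∑ j, θ j)
    (hNA : (N : ℝ) * A₁ > a * A₂) (hx₁ : 1 < x₁)
    (hxeq : x₁ * Real.log x₁ - x₁ + 1 = A₁ - (a / (N : ℝ)) * A₂)
    (hEmax_lo : a * (x₁ - 1) / (A₁ + x₁ - 1) ≤ Emax)
    (hEmax_hi : Emax ≤ (N : ℝ) * (x₁ - 1) / A₂)
    (hD : D = (N : ℝ) * (x₁ - 1 + A₁) - a * A₂)
    (τ0s Es : ℝ) (τ1s : Fin M → ℝ) (τ2s : Fin N → ℝ)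
    (hτ0s : τ0s = ((N : ℝ) * (x₁ - 1) - Emax * A₂) / D)
    (hτ1s : ∀ i, τ1s i =
      γ i * ((N : ℝ) * (x₁ - 1) - Emax * A₂) / ((x₁ - 1) * D))
    (hτ2s : ∀ j, τ2s j =
      θ j * (Emax * (x₁ - 1 + A₁) - a * (x₁ - 1)) / ((x₁ - 1) * D))
    (hEs : Es = (Emax * (x₁ - 1 + A₁) - a * (x₁ - 1)) / D) :
    0 < D ∧
    (0 ≤ τ0s ∧ (∀ i, 0 ≤ τ1s i) ∧ (∀ j, 0 ≤ τ2s j) ∧ 0 ≤ Es ∧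
      τ0s + (∑ i, τ1s i) + (∑ j, τ2s j) ≤ 1 ∧
      a * τ0s + (N : ℝ) * Es ≤ Emax) ∧
    ∀ (τ0 : ℝ) (τ1 : Fin M → ℝ) (τ2 : Fin N → ℝ) (Ebar : ℝ),
      0 ≤ τ0 → (∀ i, 0 ≤ τ1 i) → (∀ j, 0 ≤ τ2 j) → 0 ≤ Ebar →
      τ0 + (∑ i, τ1 i) + (∑ j, τ2 j) ≤ 1 →
      a * τ0 + (N : ℝ) * Ebar ≤ Emax →
      (∑ i, τ1 i * Real.logb 2 (1 + γ i * τ0 / τ1 i)) +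
          (∑ j, τ2 j * Real.logb 2 (1 + θ j * Ebar / τ2 j)) ≤
        (∑ i, τ1s i * Real.logb 2 (1 + γ i * τ0s / τ1s i)) +
          ∑ j, τ2s j * Real.logb 2 (1 + θ j * Es / τ2s j) := by
  subst hA₁ hA₂ hD hτ0s hEs
  obtain rfl : τ1s = _ := funext hτ1s
  obtain rfl : τ2s = _ := funext hτ2s
  have hb : (0 : ℝ) < N := Nat.cast_pos.2 hN
  have hA₁ : 0 ≤ ∑ i, γ i := sum_nonneg fun i _ => (hγ i).le
  have hA₂ : 0 < ∑ j, θ j := sum_pos (fun j _ => hθ j) ⟨⟨0, hN⟩, mem_univ _⟩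
  have hlo : a * (x₁ - 1) ≤ Emax * (x₁ - 1 + ∑ i, γ i) := by
    rwa [div_le_iff₀ (by linarith), add_sub_assoc, add_comm] at hEmax_lo
  obtain ⟨hD, hfeasible, hmax⟩ := P4_opt_middle_regime_general one_lt_two hb hx₁
    (fun i => (hγ i).le) (fun j => (hθ j).le) hxeq hlo ((le_div_iff₀ hA₂).1 hEmax_hi)
  exact ⟨hD, hfeasible, fun τ0 τ1 τ2 Ebar h₀ h₁ h₂ hE hslot henergy =>
    isMaxOn_iff.1 hmax ⟨τ0, τ1, τ2, Ebar⟩ ⟨h₀, h₁, h₂, hE, hslot, henergy⟩⟩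
end
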